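/- The axiom scheme ALLeq (∀x x≡y → (∀xφ → ∀yφ)) is not provable from the set of axiom schemes TMM ∖ {spec, ALLeq}. -/

import Mathlib

set_option autoImplicit false

/-! ## Megill-style scheme-level formalization of first-order logic -/

/-- Metavariables: variable metavariables `vr i` (standing for x_i) and
formula metavariables `fm i` (standing for φ_i). -/
inductive MV : Type
  | vr (i : ℕ) : MV
  | fm (i : ℕ) : MV
  deriving DecidableEq

/-- Metaformulas over the pure language of equality. -/
inductive MF : Type
  | phi (i : ℕ) : MF
  | eq (i j : ℕ) : MF
  | imp (a b : MF) : MF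
  | not (a : MF) : MF
  | all (i : ℕ) (a : MF) : MF
  deriving DecidableEq

/-- The set of metavariables occurring in a metaformula. -/
def MF.OC : MF → Set MV
  | .phi i => {MV.fm i}
  | .eq i j => {MV.vr i, MV.vr j}
  | .imp a b => a.OC ∪ b.OC
  | .not a => a.OC
  | .all i a => insert (MV.vr i) a.OC

/-- A scheme: finitely many hypotheses, a conclusion, and disjoint-variable
(DV) conditions given as unordered pairs of metavariables. -/
structure Scheme : Type where
  hyps : Finset MF
  concl : MF
  dv : Set (Sym2 MV)

/-- Metavariables occurring in a scheme (in its hypotheses or conclusion). -/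
def Scheme.OC (Φ : Scheme) : Set MV :=
  {m | ∃ h ∈ Φ.hyps, m ∈ h.OC} ∪ Φ.concl.OC

/-- A (type-preserving) substitution: variable metavariables go to variable
metavariables, formula metavariables go to metaformulas; it is the identity
outside a finite set. -/
structure Subst : Type where
  vr : ℕ → ℕ
  fm : ℕ → MF
  finVr : {i : ℕ | vr i ≠ i}.Finite
  finFm : {i : ℕ | fm i ≠ MF.phi i}.Finite

/-- Action of a substitution on a metaformula. -/
def MF.substMF (σ : Subst) : MF → MF
  | .phi i => σ.fm i
  | .eq i j => .eq (σ.vr i) (σ.vr j)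
  | .imp a b => .imp (a.substMF σ) (b.substMF σ)
  | .not a => .not (a.substMF σ)
  | .all i a => .all (σ.vr i) (a.substMF σ)

/-- The set of metavariables occurring in the image of a metavariable. -/
def Subst.appMV (σ : Subst) : MV → Set MV
  | .vr i => {MV.vr (σ.vr i)}
  | .fm i => (σ.fm i).OC

/-- σ is the identity on a given metavariable. -/
def Subst.Fixes (σ : Subst) : MV → Prop
  | .vr i => σ.vr i = i
  | .fm i => σ.fm i = MF.phi i

/-- A substitution is legitimate on a scheme if it does not violate its
DV conditions. -/
def Subst.Legit (σ : Subst) (Φ : Scheme) : Prop :=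
  ∀ m n : MV, s(m, n) ∈ Φ.dv → σ.appMV m ∩ σ.appMV n = ∅

/-- Propagation of DV conditions along a substitution. -/
def Subst.dvMap (σ : Subst) (D : Set (Sym2 MV)) : Set (Sym2 MV) :=
  {q | ∃ m' n' m n : MV, s(m', n') ∈ D ∧ m ∈ σ.appMV m' ∧ n ∈ σ.appMV n' ∧ q = s(m, n)}

/-- Action of a substitution on a scheme. -/
def Scheme.substS (Φ : Scheme) (σ : Subst) : Scheme :=
  ⟨Φ.hyps.image (MF.substMF σ), Φ.concl.substMF σ, σ.dvMap Φ.dv⟩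

/-- `Φ.Inst Ψ` : Ψ is an instance of Φ, i.e. the result of a legitimate
substitution, possibly followed by the addition of DV conditions. -/
def Scheme.Inst (Φ Ψ : Scheme) : Prop :=
  ∃ σ : Subst, σ.Legit Φ ∧ Ψ.hyps = Φ.hyps.image (MF.substMF σ) ∧
    Ψ.concl = Φ.concl.substMF σ ∧ σ.dvMap Φ.dv ⊆ Ψ.dv

/-- Metavariables occurring in a list of metaformulas. -/
def listOC (P : List MF) : Set MV := {m | ∃ f ∈ P, m ∈ f.OC}

/-- The DV conditions of a proof `P` of the scheme `Φ`: those of `Φ`, plus all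
pairs {m, n} where m is a dummy metavariable of `P` and n occurs in `P`. -/
def proofDV (Φ : Scheme) (P : List MF) : Set (Sym2 MV) :=
  Φ.dv ∪ {q | ∃ m n : MV, m ∈ listOC P ∧ m ∉ Φ.OC ∧ n ∈ listOC P ∧ q = s(m, n)}

/-- `P` is a proof of the scheme `Φ` from the set `S` of schemes. -/
def IsProof (S : Set Scheme) (Φ : Scheme) (P : List MF) : Prop :=
  P ≠ [] ∧ P.getLast? = some Φ.concl ∧
  ∀ (k : ℕ) (hk : k < P.length),
    P.get ⟨k, hk⟩ ∈ Φ.hyps ∨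
    ∃ hs : Finset MF,
      (∀ h ∈ hs, ∃ (l : ℕ) (hl : l < k), P.get ⟨l, hl.trans hk⟩ = h) ∧
      ∃ Ξ ∈ S, Ξ.Inst ⟨hs, P.get ⟨k, hk⟩, proofDV Φ P⟩

/-- `S ⊢ Φ` : the scheme `Φ` is provable from the set `S` of schemes. -/
def Provable (S : Set Scheme) (Φ : Scheme) : Prop := ∃ P : List MF, IsProof S Φ P

/-! ## Object level: first-order formulas and semantics -/

/-- First-order formulas over the pure language of equality, with
individual variables v_i. -/
inductive FM : Type
  | eq (i j : ℕ) : FM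
  | imp (a b : FM) : FM
  | not (a : FM) : FM
  | all (i : ℕ) (a : FM) : FM
  deriving DecidableEq

/-- Variables occurring in a first-order formula. -/
def FM.vars : FM → Set ℕ
  | .eq i j => {i, j}
  | .imp a b => a.vars ∪ b.vars
  | .not a => a.vars
  | .all i a => insert i a.vars

/-- An object-substitution: variable metavariables go to individual variables,
formula metavariables go to first-order formulas. -/
structure OSubst : Type where
  vr : ℕ → ℕ
  fm : ℕ → FM

/-- Action of an object-substitution on a metaformula, yielding a first-order
formula (an object-instance). -/
def MF.osubst (τ : OSubst) : MF → FM
  | .phi i => τ.fm i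
  | .eq i j => .eq (τ.vr i) (τ.vr j)
  | .imp a b => .imp (a.osubst τ) (b.osubst τ)
  | .not a => .not (a.osubst τ)
  | .all i a => .all (τ.vr i) (a.osubst τ)

/-- Variables occurring in the image of a metavariable. -/
def OSubst.appVars (τ : OSubst) : MV → Set ℕ
  | .vr i => {τ.vr i}
  | .fm i => (τ.fm i).vars

/-- An object-substitution is legitimate on a scheme if images of DV-paired
metavariables share no variables. -/
def OSubst.Legit (τ : OSubst) (Φ : Scheme) : Prop :=
  ∀ m n : MV, s(m, n) ∈ Φ.dv → τ.appVars m ∩ τ.appVars n = ∅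

/-- Evaluation of a first-order formula in a structure with domain `D`
(equality interpreted as equality) under an assignment `ρ`. -/
def FM.eval {D : Type} (ρ : ℕ → D) : FM → Prop
  | .eq i j => ρ i = ρ j
  | .imp a b => a.eval ρ → b.eval ρ
  | .not a => ¬ a.eval ρ
  | .all i a => ∀ d : D, a.eval (Function.update ρ i d)

/-- Validity of a first-order formula in the structure with domain `D`. -/
def FM.Valid (D : Type) (f : FM) : Prop := ∀ ρ : ℕ → D, f.eval ρ

/-- A scheme is true if for every legitimate object-instance and every
nonempty domain, the conclusion is valid whenever all hypotheses are. -/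
def Scheme.IsTrue (Φ : Scheme) : Prop :=
  ∀ τ : OSubst, τ.Legit Φ →
    ∀ D : Type, Nonempty D →
      (∀ h ∈ Φ.hyps, FM.Valid D (h.osubst τ)) → FM.Valid D (Φ.concl.osubst τ)

/-! ## (i,j)-transforms and supertruth -/

/-- Auxiliary: (i,j)-transform with a flag recording whether we are inside the
scope of a quantifier ∀x_i. -/
def MF.transfAux (i j : ℕ) : MF → Bool → MF
  | .phi k, _ => .phi k
  | .eq a b, ins =>
      .eq (if ins = true ∧ a = j then i else a) (if ins = true ∧ b = j then i else b)
  | .imp a b, ins => .imp (a.transfAux i j ins) (b.transfAux i j ins)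
  | .not a, ins => .not (a.transfAux i j ins)
  | .all k a, ins =>
      .all (if ins = true ∧ k = j then i else k) (a.transfAux i j (ins || decide (k = i)))

/-- The (i,j)-transform of a metaformula: replace every occurrence of x_j
lying within the scope of a quantifier ∀x_i by x_i. -/
def MF.transform (i j : ℕ) (f : MF) : MF := f.transfAux i j false

/-- The (i,j)-transform of a scheme: transform hypotheses and conclusion,
keep the DV conditions. -/
def Scheme.transform (i j : ℕ) (Φ : Scheme) : Scheme :=
  ⟨Φ.hyps.image (MF.transform i j), Φ.concl.transform i j, Φ.dv⟩

/-- The (i,j)-transform (and the {i,j}-transform) is legitimate on a scheme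
if {x_i, x_j} is not among its DV conditions. -/
def Scheme.TLegit (i j : ℕ) (Φ : Scheme) : Prop := s(MV.vr i, MV.vr j) ∉ Φ.dv

/-- A (hypothesis-free) scheme is presupertrue if all the legitimate
(i,j)-transforms of all its instances (including itself) are true. -/
def Scheme.PreST (Φ : Scheme) : Prop :=
  ∀ Ψ : Scheme, (Ψ = Φ ∨ Φ.Inst Ψ) → ∀ i j : ℕ, Ψ.TLegit i j → (Ψ.transform i j).IsTrue

/-- A scheme is supertrue if every instance of it (including itself) satisfies:
whenever all legitimate (i,j)-transforms of all instances of each of its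
hypotheses (taken as hypothesis-free schemes with the inherited DV conditions)
are true, all legitimate (i,j)-transforms of all instances of its conclusion
are true. -/
def Scheme.Supertrue (Φ : Scheme) : Prop :=
  ∀ Ψ : Scheme, (Ψ = Φ ∨ Φ.Inst Ψ) →
    (∀ h ∈ Ψ.hyps, Scheme.PreST ⟨∅, h, Ψ.dv⟩) → Scheme.PreST ⟨∅, Ψ.concl, Ψ.dv⟩

/-- The {i,j}-transform of a metaformula: the composite of the (i,j)-transform
and the (j,i)-transform, the one with smaller first index performed first. -/
def MF.stransform (i j : ℕ) (f : MF) : MF :=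
  if i ≤ j then (f.transform i j).transform j i else (f.transform j i).transform i j

/-- The {i,j}-transform of a scheme. -/
def Scheme.stransform (i j : ℕ) (Φ : Scheme) : Scheme :=
  ⟨Φ.hyps.image (MF.stransform i j), Φ.concl.stransform i j, Φ.dv⟩

/-- A metaformula contains no formula metavariables. -/
def MF.FmFree : MF → Prop
  | .phi _ => False
  | .eq _ _ => True
  | .imp a b => a.FmFree ∧ b.FmFree
  | .not a => a.FmFree
  | .all _ a => a.FmFree

/-- A scheme contains no formula metavariables. -/
def Scheme.FmFree (Φ : Scheme) : Prop := (∀ h ∈ Φ.hyps, h.FmFree) ∧ Φ.concl.FmFree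

/-- A (hypothesis-free) scheme is pre-semisupertrue if all the legitimate
{i,j}-transforms of all its instances (including itself) are true. -/
def Scheme.PreSST (Φ : Scheme) : Prop :=
  ∀ Ψ : Scheme, (Ψ = Φ ∨ Φ.Inst Ψ) → ∀ i j : ℕ, Ψ.TLegit i j → (Ψ.stransform i j).IsTrue

/-- A scheme is semisupertrue if it is true and every formula-metavariable-free
instance of it satisfies: whenever all legitimate {i,j}-transforms of all
instances of each of its hypotheses are true, all legitimate {i,j}-transforms
of all instances of its conclusion are true. -/
def Scheme.Semisupertrue (Φ : Scheme) : Prop :=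
  Φ.IsTrue ∧
  ∀ Ψ : Scheme, (Ψ = Φ ∨ Φ.Inst Ψ) → Ψ.FmFree →
    (∀ h ∈ Ψ.hyps, Scheme.PreSST ⟨∅, h, Ψ.dv⟩) → Scheme.PreSST ⟨∅, Ψ.concl, Ψ.dv⟩

/-- A metaformula is quantifier-free. -/
def MF.QFree : MF → Prop
  | .phi _ => True
  | .eq _ _ => True
  | .imp a b => a.QFree ∧ b.QFree
  | .not a => a.QFree
  | .all _ _ => False

/-- A scheme is quantifier-free. -/
def Scheme.QFree (Φ : Scheme) : Prop := (∀ h ∈ Φ.hyps, h.QFree) ∧ Φ.concl.QFree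

/-! ## The axiom schemes of the system TMM
(x = x_0, y = x_1, z = x_2; φ = φ_0, ψ = φ_1, χ = φ_2, θ = φ_3, τ = φ_4) -/

def ax_mp : Scheme := ⟨{.phi 0, .imp (.phi 0) (.phi 1)}, .phi 1, ∅⟩

def ax_minimp : Scheme :=
  ⟨∅, .imp (.phi 0) (.imp (.imp (.phi 1) (.phi 2))
      (.imp (.imp (.imp (.phi 3) (.phi 1)) (.imp (.phi 2) (.phi 4)))
        (.imp (.phi 1) (.phi 4)))), ∅⟩

def ax_peirce : Scheme := ⟨∅, .imp (.imp (.imp (.phi 0) (.phi 1)) (.phi 0)) (.phi 0), ∅⟩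

def ax_contrap : Scheme :=
  ⟨∅, .imp (.imp (.phi 0) (.not (.phi 1))) (.imp (.phi 1) (.not (.phi 0))), ∅⟩

def ax_notelim : Scheme := ⟨∅, .imp (.not (.phi 0)) (.imp (.phi 0) (.phi 1)), ∅⟩

def ax_gen : Scheme := ⟨{.phi 0}, .all 0 (.phi 0), ∅⟩

def ax_ALLdistr : Scheme :=
  ⟨∅, .imp (.all 0 (.imp (.phi 0) (.phi 1))) (.imp (.all 0 (.phi 0)) (.all 0 (.phi 1))), ∅⟩

def ax_spec : Scheme := ⟨∅, .imp (.all 0 (.phi 0)) (.phi 0), ∅⟩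

def ax_modal5 : Scheme :=
  ⟨∅, .imp (.not (.all 0 (.phi 0))) (.all 0 (.not (.all 0 (.phi 0)))), ∅⟩

def ax_vacGen : Scheme := ⟨∅, .imp (.phi 0) (.all 0 (.phi 0)), {s(MV.vr 0, MV.fm 0)}⟩

def ax_ALLcomm : Scheme :=
  ⟨∅, .imp (.all 0 (.all 1 (.phi 0))) (.all 1 (.all 0 (.phi 0))), ∅⟩

def ax_EQrefl : Scheme := ⟨∅, .eq 0 0, ∅⟩

def ax_EQsymm : Scheme := ⟨∅, .imp (.eq 0 1) (.eq 1 0), ∅⟩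

def ax_EQtrans : Scheme := ⟨∅, .imp (.eq 0 1) (.imp (.eq 1 2) (.eq 0 2)), ∅⟩

def ax_denot : Scheme :=
  ⟨∅, .imp (.eq 0 0) (.not (.all 1 (.not (.eq 1 0)))), {s(MV.vr 0, MV.vr 1)}⟩

def ax_subst : Scheme :=
  ⟨∅, .all 0 (.imp (.eq 0 1) (.imp (.phi 0) (.all 0 (.imp (.eq 0 1) (.phi 0))))),
    {s(MV.vr 0, MV.vr 1), s(MV.vr 1, MV.fm 0)}⟩

def ax_ALLeq : Scheme :=
  ⟨∅, .imp (.all 0 (.eq 0 1)) (.imp (.all 0 (.phi 0)) (.all 1 (.phi 0))), ∅⟩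

def ax_genEq : Scheme :=
  ⟨∅, .imp (.not (.all 0 (.eq 0 1)))
      (.imp (.not (.all 0 (.eq 0 2))) (.imp (.eq 1 2) (.all 0 (.eq 1 2)))), ∅⟩

def ax_modalD : Scheme := ⟨∅, .imp (.all 0 (.not (.phi 0))) (.not (.all 0 (.phi 0))), ∅⟩

def ax_modal4 : Scheme := ⟨∅, .imp (.all 0 (.phi 0)) (.all 0 (.all 0 (.phi 0))), ∅⟩

/-- The system TMM. -/
def TMM : Set Scheme :=
  {ax_mp, ax_minimp, ax_peirce, ax_contrap, ax_notelim, ax_gen, ax_ALLdistr, ax_spec,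
   ax_modal5, ax_vacGen, ax_ALLcomm, ax_EQrefl, ax_EQsymm, ax_EQtrans, ax_denot,
   ax_subst, ax_ALLeq, ax_genEq}

/-- The subsystem T. -/
def Tsys : Set Scheme :=
  {ax_mp, ax_minimp, ax_peirce, ax_contrap, ax_notelim, ax_gen, ax_ALLdistr, ax_vacGen,
   ax_EQrefl, ax_EQsymm, ax_EQtrans, ax_denot}

/-! ## Proof: evaluation with the variable `x_1` read as `x_0` in the scope of `∀x_0` -/

/-- Inside the scope of `∀x_0` (flag `true`), the variable `x_1` is read as `x_0`. -/
def rd (b : Bool) (k : ℕ) : ℕ := if b = true ∧ k = 1 then 0 else k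

/-- Twisted evaluation; `φ_0` is read as `x_0 ≡ x_1`, other `φ_k` as truth. -/
def ev : MF → Bool → (ℕ → Bool) → Prop
  | .phi k, b, ρ => k = 0 → ρ (rd b 0) = ρ (rd b 1)
  | .eq i j, b, ρ => ρ (rd b i) = ρ (rd b j)
  | .imp p q, b, ρ => ev p b ρ → ev q b ρ
  | .not p, b, ρ => ¬ ev p b ρ
  | .all i p, b, ρ => ∀ d : Bool, ev p (b || decide (i = 0)) (Function.update ρ (rd b i) d)

theorem ev_true_congr (f : MF) : ∀ ρ ρ' : ℕ → Bool, (∀ k, k ≠ 1 → ρ k = ρ' k) →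
    (ev f true ρ ↔ ev f true ρ') := by
  have hr : ∀ k, rd true k ≠ 1 := by intro k; unfold rd; split <;> simp_all
  induction f with
  | phi k => intro ρ ρ' h; simp only [ev, h _ (hr _)]
  | eq i j => intro ρ ρ' h; simp only [ev, h _ (hr _)]
  | imp p q ihp ihq => intro ρ ρ' h; simp only [ev, ihp ρ ρ' h, ihq ρ ρ' h]
  | not p ih => intro ρ ρ' h; simp only [ev, ih ρ ρ' h]
  | all i p ih =>
    intro ρ ρ' h
    simp only [ev, Bool.true_or]
    refine forall_congr' fun d => ih _ _ fun k hk => ?_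
    simp only [Function.update_apply, h k hk]

theorem ev_fresh (i : ℕ) (hi : 2 ≤ i) (f : MF) (hf : MV.vr i ∉ f.OC) :
    ∀ (b : Bool) (ρ ρ' : ℕ → Bool), (∀ k, k ≠ i → ρ k = ρ' k) → (ev f b ρ ↔ ev f b ρ') := by
  have hr : ∀ b k, k ≠ i → rd b k ≠ i := by
    intro b k hk; unfold rd; split <;> omega
  induction f with
  | phi k =>
    intro b ρ ρ' h
    simp only [ev, h _ (hr b 0 (by omega)), h _ (hr b 1 (by omega))]
  | eq j k =>
    intro b ρ ρ' h
    simp only [MF.OC, Set.mem_insert_iff, Set.mem_singleton_iff, MV.vr.injEq, not_or] at hf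
    simp only [ev, h _ (hr b j (Ne.symm hf.1)), h _ (hr b k (Ne.symm hf.2))]
  | imp p q ihp ihq =>
    intro b ρ ρ' h
    simp only [MF.OC, Set.mem_union, not_or] at hf
    simp only [ev, ihp hf.1 b ρ ρ' h, ihq hf.2 b ρ ρ' h]
  | not p ih => intro b ρ ρ' h; simp only [ev, ih hf b ρ ρ' h]
  | all j p ih =>
    intro b ρ ρ' h
    simp only [MF.OC, Set.mem_insert_iff, not_or] at hf
    simp only [ev]
    refine forall_congr' fun d => ih hf.2 _ _ _ fun k hk => ?_
    simp only [Function.update_apply, h k hk]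

theorem ev_avoid (f : MF) (h0 : MV.vr 0 ∉ f.OC) (h1 : MV.vr 1 ∉ f.OC) (h2 : MV.fm 0 ∉ f.OC) :
    ∀ (b b' : Bool) (ρ ρ' : ℕ → Bool), (∀ k, 2 ≤ k → ρ k = ρ' k) →
      (ev f b ρ ↔ ev f b' ρ') := by
  have hr : ∀ b k, k ≠ 1 → rd b k = k := by
    intro b k hk; unfold rd; simp [hk]
  induction f with
  | phi k =>
    intro b b' ρ ρ' h
    simp only [MF.OC, Set.mem_singleton_iff, MV.fm.injEq] at h2
    simp [ev, Ne.symm h2]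
  | eq j k =>
    intro b b' ρ ρ' h
    simp only [MF.OC, Set.mem_insert_iff, Set.mem_singleton_iff, MV.vr.injEq, not_or] at h0 h1
    simp only [ev]
    rw [hr _ j (by omega), hr _ k (by omega), hr _ j (by omega), hr _ k (by omega),
      h j (by omega), h k (by omega)]
  | imp p q ihp ihq =>
    intro b b' ρ ρ' h
    simp only [MF.OC, Set.mem_union, not_or] at h0 h1 h2
    simp only [ev, ihp h0.1 h1.1 h2.1 b b' ρ ρ' h, ihq h0.2 h1.2 h2.2 b b' ρ ρ' h]
  | not p ih => intro b b' ρ ρ' h; simp only [ev, ih h0 h1 h2 b b' ρ ρ' h]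
  | all j p ih =>
    intro b b' ρ ρ' h
    simp only [MF.OC, Set.mem_insert_iff, MV.vr.injEq, not_or] at h0 h1 h2
    simp only [ev]
    refine forall_congr' fun d => ih h0.2 h1.2 h2.2 _ _ _ _ fun k hk => ?_
    rw [hr _ j (by omega), hr _ j (by omega)]
    simp only [Function.update_apply, h k hk]

/-- The metavariables of `ALLeq`. -/
def core (m : MV) : Prop := m = MV.vr 0 ∨ m = MV.vr 1 ∨ m = MV.fm 0

theorem core_OC (m : MV) (h : core m) : m ∈ ax_ALLeq.OC := by
  rcases h with rfl | rfl | rfl <;> simp [Scheme.OC, ax_ALLeq, MF.OC]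

theorem not_core (P : List MF) (m n : MV) (h : s(m, n) ∈ proofDV ax_ALLeq P) :
    ¬ (core m ∧ core n) := by
  rintro ⟨hm, hn⟩
  rcases h with h | ⟨a, c, _, ha, _, he⟩
  · simp [ax_ALLeq] at h
  · rcases Sym2.eq_iff.1 he with ⟨rfl, rfl⟩ | ⟨rfl, rfl⟩
    · exact ha (core_OC _ hm)
    · exact ha (core_OC _ hn)

theorem sound_vacGen (i : ℕ) (f : MF)
    (hd : ∀ n ∈ f.OC, n ≠ MV.vr i ∧ ¬ (core (MV.vr i) ∧ core n)) (b : Bool) (ρ : ℕ → Bool)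
    (h : ev f b ρ) : ev (.all i f) b ρ := by
  intro d
  by_cases hi : 2 ≤ i
  · have h1 : decide (i = 0) = false := by simp; omega
    have h2 : rd b i = i := by unfold rd; rw [if_neg]; omega
    rw [h1, h2, Bool.or_false]
    refine (ev_fresh i hi f (fun hh => (hd _ hh).1 rfl) b ρ _ fun k hk => ?_).1 h
    simp [Function.update_apply, hk]
  · have hc : core (MV.vr i) := by
      have : i = 0 ∨ i = 1 := by omega
      rcases this with rfl | rfl <;> simp [core]
    refine (ev_avoid f ?_ ?_ ?_ b _ ρ _ fun k hk => ?_).1 h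
    · exact fun hh => (hd _ hh).2 ⟨hc, by simp [core]⟩
    · exact fun hh => (hd _ hh).2 ⟨hc, by simp [core]⟩
    · exact fun hh => (hd _ hh).2 ⟨hc, by simp [core]⟩
    · have : k ≠ rd b i := by unfold rd; split <;> omega
      simp [Function.update_apply, this]

theorem sound_ALLcomm (i j : ℕ) (f : MF) (b : Bool) (ρ : ℕ → Bool)
    (h : ev (.all i (.all j f)) b ρ) : ev (.all j (.all i f)) b ρ := by
  intro d e
  by_cases hb : b = true ∨ (2 ≤ i ∨ 2 ≤ j) ∨ i = j
  · have h' := h e d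
    have key : ∀ c : Bool, rd (b || decide (j = 0)) i = rd b i ∧
        rd (b || decide (i = 0)) j = rd b j := by
      intro _
      unfold rd
      rcases hb with hb | hb | hb
      · simp [hb]
      · constructor
        · by_cases h1 : i = 1
          · have : decide (j = 0) = false := by simp; omega
            rw [this, Bool.or_false]
          · simp [h1]
        · by_cases h1 : j = 1
          · have : decide (i = 0) = false := by simp; omega
            rw [this, Bool.or_false]
          · simp [h1]
      · subst hb
        by_cases h1 : i = 1 <;> simp [h1]
    rw [(key b).2] at h'
    rw [(key b).1]
    have hf : (b || decide (j = 0) || decide (i = 0)) = (b || decide (i = 0) || decide (j = 0)) := by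
      cases b <;> simp [Bool.or_comm]
    rw [hf]
    by_cases hij : rd b i = rd b j
    · have h'' := h d e
      rw [(key b).2] at h''
      rw [hij] at h'' ⊢
      exact h''
    · rw [Function.update_comm (Ne.symm hij)]
      exact h'
  · have hb' : b = false := by simpa using fun h => hb (Or.inl h)
    subst hb'
    have : (i = 0 ∧ j = 1) ∨ (i = 1 ∧ j = 0) := by omega
    rcases this with ⟨rfl, rfl⟩ | ⟨rfl, rfl⟩
    · have h' := h d e
      simp only [rd] at h' ⊢
      simp at h' ⊢
      refine (ev_true_congr f _ _ fun k hk => ?_).1 h'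
      simp [Function.update_apply, hk]
    · have h' := h d e
      simp only [rd] at h' ⊢
      simp at h' ⊢
      refine (ev_true_congr f _ _ fun k hk => ?_).1 h'
      simp [Function.update_apply, hk]

theorem rd_ne (i j : ℕ) (hij : i ≠ j) (hc : ¬ (core (MV.vr i) ∧ core (MV.vr j))) (b : Bool) :
    rd b i ≠ rd b j := by
  have : ¬ ((i = 0 ∨ i = 1) ∧ (j = 0 ∨ j = 1)) := by simpa [core] using hc
  unfold rd
  split <;> split <;> omega

theorem rd_flag (i j : ℕ) (hij : i ≠ j) (hc : ¬ (core (MV.vr i) ∧ core (MV.vr j))) (b : Bool) :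
    rd (b || decide (i = 0)) i = rd b i ∧ rd (b || decide (i = 0)) j = rd b j := by
  have : ¬ ((i = 0 ∨ i = 1) ∧ (j = 0 ∨ j = 1)) := by simpa [core] using hc
  by_cases h : i = 0
  · subst h
    have : j ≠ 1 := by omega
    simp [rd, this]
  · simp [h]

theorem sound_denot (i j : ℕ) (hij : i ≠ j) (hc : ¬ (core (MV.vr i) ∧ core (MV.vr j))) (b : Bool)
    (ρ : ℕ → Bool) : ¬ ev (.all i (.not (.eq i j))) b ρ := by
  intro h
  have h1 := h (ρ (rd b j))
  simp only [ev] at h1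
  rw [(rd_flag i j hij hc b).1, (rd_flag i j hij hc b).2] at h1
  simp [(rd_ne i j hij hc b).symm] at h1

theorem sound_subst (i j : ℕ) (hij : i ≠ j) (hc : ¬ (core (MV.vr i) ∧ core (MV.vr j))) (f : MF)
    (b : Bool) (ρ : ℕ → Bool) :
    ev (.all i (.imp (.eq i j) (.imp f (.all i (.imp (.eq i j) f))))) b ρ := by
  intro d h1 h2 e h3
  have hb : (b || decide (i = 0) || decide (i = 0)) = (b || decide (i = 0)) := by
    cases b <;> simp
  rw [hb] at h3 ⊢
  simp only [ev] at h1 h3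
  have hn := (rd_ne i j hij hc b).symm
  rw [(rd_flag i j hij hc b).1, (rd_flag i j hij hc b).2] at h1 h3
  rw [(rd_flag i j hij hc b).1]
  simp [hn] at h1 h3
  subst h1 h3
  simpa using h2

theorem sound_genEq (i j k : ℕ) (b : Bool) (ρ : ℕ → Bool)
    (h1 : ¬ ev (.all i (.eq i j)) b ρ) (h2 : ¬ ev (.all i (.eq i k)) b ρ)
    (h3 : ev (.eq j k) b ρ) : ev (.all i (.eq j k)) b ρ := by
  have key : ∀ l, ¬ ev (.all i (.eq i l)) b ρ →
      rd (b || decide (i = 0)) l = rd b l ∧ rd b l ≠ rd b i := by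
    intro l hl
    have hne : rd (b || decide (i = 0)) i ≠ rd (b || decide (i = 0)) l := by
      intro he
      apply hl
      intro d
      simp only [ev, he]
    by_cases hi : i = 0
    · subst hi
      have hl1 : l ≠ 1 := by rintro rfl; simp [rd] at hne
      simp [rd, hl1] at hne ⊢
      omega
    · simp only [hi, decide_false, Bool.or_false] at hne ⊢
      exact ⟨trivial, hne.symm⟩
  intro d
  simp only [ev] at h3 ⊢
  rw [(key j h1).1, (key k h2).1]
  simp [(key j h1).2, (key k h2).2, h3]

theorem sound (P : List MF) (hP : IsProof (TMM \ {ax_spec, ax_ALLeq}) ax_ALLeq P) :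
    ∀ (k : ℕ) (hk : k < P.length) (b : Bool) (ρ : ℕ → Bool), ev (P.get ⟨k, hk⟩) b ρ := by
  intro k
  induction k using Nat.strong_induction_on with
  | _ k ih =>
  intro hk
  rcases hP.2.2 k hk with hh | ⟨hs, hhs, Ξ, ⟨hΞ, hne⟩, σ, hleg, hhyp, hcon, hdv⟩
  · simp [ax_ALLeq] at hh
  have hs_sound : ∀ h ∈ hs, ∀ b ρ, ev h b ρ := by
    intro h hh
    obtain ⟨l, hl, rfl⟩ := hhs h hh
    exact ih l hl _
  have hD : ∀ m' n' m n : MV, s(m', n') ∈ Ξ.dv → m ∈ σ.appMV m' → n ∈ σ.appMV n' →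
      n ≠ m ∧ ¬ (core m ∧ core n) := by
    intro m' n' m n h hm hn
    refine ⟨?_, not_core P m n (hdv ⟨m', n', m, n, h, hm, hn, rfl⟩)⟩
    rintro rfl
    have := hleg m' n' h
    exact (Set.eq_empty_iff_forall_notMem.1 this n) ⟨hm, hn⟩
  simp only at hhyp hcon
  rw [hcon]
  clear hcon hdv hleg ih
  intro b ρ
  simp only [TMM, Set.mem_insert_iff, Set.mem_singleton_iff] at hΞ
  rcases hΞ with rfl | rfl | rfl | rfl | rfl | rfl | rfl | rfl | rfl | rfl | rfl | rfl | rfl |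
    rfl | rfl | rfl | rfl | rfl
  · -- mp
    have h1 := hs_sound ((MF.phi 0).substMF σ) (by rw [hhyp]; simp [ax_mp]) b ρ
    have h2 := hs_sound ((MF.imp (.phi 0) (.phi 1)).substMF σ)
      (by rw [hhyp]; simp [ax_mp]) b ρ
    exact h2 h1
  · simp only [ax_minimp, MF.substMF, ev]; tauto
  · simp only [ax_peirce, MF.substMF, ev]; tauto
  · simp only [ax_contrap, MF.substMF, ev]; tauto
  · simp only [ax_notelim, MF.substMF, ev]; tauto
  · -- gen
    intro d
    exact hs_sound ((MF.phi 0).substMF σ) (by rw [hhyp]; simp [ax_gen]) _ _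
  · exact fun h1 h2 d => h1 d (h2 d)
  · exact absurd (Or.inl rfl) hne
  · -- modal5
    simp only [ax_modal5, MF.substMF, ev]
    intro h1 d h2
    apply h1
    intro e
    have h3 := h2 e
    have hb : (b || decide (σ.vr 0 = 0) || decide (σ.vr 0 = 0)) = (b || decide (σ.vr 0 = 0)) := by
      cases b <;> simp
    have hr : rd (b || decide (σ.vr 0 = 0)) (σ.vr 0) = rd b (σ.vr 0) := by
      by_cases h : σ.vr 0 = 0 <;> simp [h, rd]
    rw [hb, hr, Function.update_idem] at h3
    exact h3
  · -- vacGen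
    refine sound_vacGen (σ.vr 0) (σ.fm 0) (fun n hn => ?_) b ρ
    exact hD (.vr 0) (.fm 0) _ n (by simp [ax_vacGen]) rfl hn
  · exact sound_ALLcomm _ _ _ b ρ
  · rfl
  · exact fun h => Eq.symm h
  · exact fun h h' => Eq.trans h h'
  · -- denot
    have h := hD (.vr 1) (.vr 0) _ _ (by simp [ax_denot]) rfl rfl
    exact fun _ => sound_denot _ _ (fun he => h.1 (by rw [he])) h.2 b ρ
  · -- subst
    have h := hD (.vr 0) (.vr 1) _ _ (by simp [ax_subst]) rfl rfl
    exact sound_subst _ _ (fun he => h.1 (by rw [he])) h.2 _ b ρ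
  · exact absurd (Or.inr rfl) hne
  · exact sound_genEq _ _ _ b ρ

/-- The axiom scheme ALLeq is not provable from TMM ∖ {spec, ALLeq}. -/
theorem ALLeq_independent :
    ¬ Provable (TMM \ {ax_spec, ax_ALLeq}) ax_ALLeq := by
  rintro ⟨P, hP⟩
  have hlen : P.length - 1 < P.length := by
    have := List.length_pos_iff.2 hP.1
    omega
  have hlast : P.get ⟨P.length - 1, hlen⟩ = ax_ALLeq.concl := by
    have h := hP.2.1
    rw [List.getLast?_eq_getElem?, List.getElem?_eq_getElem hlen] at h
    simpa using h
  have h := sound P hP _ hlen false (fun _ => true)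
  rw [hlast] at h
  have h1 := h (by intro d; simp [ev, rd]) (by intro d; simp [ev, rd]) false
  simp [ev, rd] at h1
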